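/- Let u ∈ F₂, let m ≥ 0 be an integer, let ψ₁ be a chain of type (C1) containing at least ‖u‖+1 factors of σ, and set ψ = τ^m σ ψ₁ (so that ψ is a chain of type (C1) containing at least ‖u‖+2 factors of σ). Then, as integers, ‖τψ(u)‖ − ‖ψ(u)‖ = ‖τ·τ^m ψ₁(u)‖ − ‖τ^m ψ₁(u)‖ + ‖σψ₁(u)‖ − ‖ψ₁(u)‖. -/

import Mathlib

noncomputable section

/-- The free group of rank two. -/
abbrev F : Type := FreeGroup (Fin 2)

/-- The generator `a`. -/
def ga : F := FreeGroup.of 0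

/-- The generator `b`. -/
def gb : F := FreeGroup.of 1

/-- Build an automorphism of `F` from images of the generators together with
an explicit inverse. -/
def mkAut (x y xi yi : F)
    (h1 : FreeGroup.lift ![xi, yi] x = ga)
    (h2 : FreeGroup.lift ![xi, yi] y = gb)
    (h3 : FreeGroup.lift ![x, y] xi = ga)
    (h4 : FreeGroup.lift ![x, y] yi = gb) : MulAut F :=
  MonoidHom.toMulEquiv (FreeGroup.lift ![x, y]) (FreeGroup.lift ![xi, yi])
    (by
      ext i
      fin_cases i
      · simpa [ga] using h1
      · simpa [gb] using h2)
    (by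
      ext i
      fin_cases i
      · simpa [ga] using h3
      · simpa [gb] using h4)

/-- `σ : a ↦ ab, b ↦ b`. -/
def σ : MulAut F :=
  mkAut (ga * gb) gb (ga * gb⁻¹) gb
    (by simp [ga, gb]) (by simp [ga, gb]) (by simp [ga, gb]) (by simp [ga, gb])

/-- `τ : a ↦ a, b ↦ ba`. -/
def τ : MulAut F :=
  mkAut ga (gb * ga) ga (gb * ga⁻¹)
    (by simp [ga, gb]) (by simp [ga, gb]) (by simp [ga, gb]) (by simp [ga, gb])

/-- `δ₁ : a ↦ b⁻¹ab, b ↦ b`. -/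
def δ₁ : MulAut F :=
  mkAut (gb⁻¹ * ga * gb) gb (gb * ga * gb⁻¹) gb
    (by simp [ga, gb, mul_assoc]) (by simp [ga, gb]) (by simp [ga, gb, mul_assoc]) (by simp [ga, gb])

/-- `δ₂ : a ↦ bab⁻¹, b ↦ b`. -/
def δ₂ : MulAut F :=
  mkAut (gb * ga * gb⁻¹) gb (gb⁻¹ * ga * gb) gb
    (by simp [ga, gb, mul_assoc]) (by simp [ga, gb]) (by simp [ga, gb, mul_assoc]) (by simp [ga, gb])

/-- `δ₃ : a ↦ a, b ↦ a⁻¹ba`. -/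
def δ₃ : MulAut F :=
  mkAut ga (ga⁻¹ * gb * ga) ga (ga * gb * ga⁻¹)
    (by simp [ga, gb]) (by simp [ga, gb, mul_assoc]) (by simp [ga, gb]) (by simp [ga, gb, mul_assoc])

/-- `δ₄ : a ↦ a, b ↦ aba⁻¹`. -/
def δ₄ : MulAut F :=
  mkAut ga (ga * gb * ga⁻¹) ga (ga⁻¹ * gb * ga)
    (by simp [ga, gb]) (by simp [ga, gb, mul_assoc]) (by simp [ga, gb]) (by simp [ga, gb, mul_assoc])

/-- `π : a ↦ b, b ↦ a⁻¹`. -/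
def pi' : MulAut F :=
  mkAut gb ga⁻¹ gb⁻¹ ga
    (by simp [ga, gb]) (by simp [ga, gb]) (by simp [ga, gb]) (by simp [ga, gb])

/-- Word length of (the reduced word representing) an element of `F`. -/
def len (w : F) : ℕ := w.toWord.length

/-- Cyclic length: minimal word length among all conjugates. -/
def cyclen (w : F) : ℕ := sInf {n | ∃ g : F, len (g * w * g⁻¹) = n}

/-- The chain `τ^{m_k}σ^{l_k}⋯τ^{m_1}σ^{l_1}` of type (C1) determined by the list
`[(l_k, m_k), …, (l_1, m_1)]` of pairs of exponents. -/
def chainC1 (c : List (ℕ × ℕ)) : MulAut F :=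
  (c.map fun p => τ ^ p.2 * σ ^ p.1).prod

/-- The chain `τ^{-m_k}σ^{-l_k}⋯τ^{-m_1}σ^{-l_1}` of type (C2) determined by the list
`[(l_k, m_k), …, (l_1, m_1)]` of pairs of exponents. -/
def chainC2 (c : List (ℕ × ℕ)) : MulAut F :=
  (c.map fun p => (τ ^ p.2)⁻¹ * (σ ^ p.1)⁻¹).prod

/-- Number of factors of `σ` in a chain. -/
def sigmaCount (c : List (ℕ × ℕ)) : ℕ := (c.map Prod.fst).sum

/-- Number of factors of `τ` in a chain. -/
def tauCount (c : List (ℕ × ℕ)) : ℕ := (c.map Prod.snd).sum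

/-- The length `Σ (l_i + m_i)` of a chain. -/
def chainLen (c : List (ℕ × ℕ)) : ℕ := sigmaCount c + tauCount c

/-- A Whitehead automorphism of type (W1): it permutes `{a, a⁻¹, b, b⁻¹}`. -/
def IsW1 (β : MulAut F) : Prop :=
  β ga ∈ ({ga, ga⁻¹, gb, gb⁻¹} : Set F) ∧ β gb ∈ ({ga, ga⁻¹, gb, gb⁻¹} : Set F)

/-- A chain of type (C1). -/
def IsC1 (φ : MulAut F) : Prop := ∃ c : List (ℕ × ℕ), c ≠ [] ∧ φ = chainC1 c

/-- A chain of type (C2). -/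
def IsC2 (φ : MulAut F) : Prop := ∃ c : List (ℕ × ℕ), c ≠ [] ∧ φ = chainC2 c

/-- A positive element: a product of the generators `a` and `b`. -/
def IsPositive (w : F) : Prop := w ∈ Submonoid.closure ({ga, gb} : Set F)

/-- The four automorphisms `δ₁, δ₂, δ₃, δ₄`. -/
def δIdx : Fin 4 → MulAut F := ![δ₁, δ₂, δ₃, δ₄]

/-!
A cyclically reduced word is a cyclic sequence of maximal blocks of constant sign. The transvection
`σ` inserts a letter `b` next to every `a^{±1}`; at each change of sign one letter `b^{±1}` cancels,
so `σ` acts blockwise, a block that consists of `b^{±1}` alone disappears, and its two neighbours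
merge. The same holds for `τ` with the roles of `a` and `b` exchanged.

The blocks without the letter `a` lose a letter each under `σ`, and their total length does not
grow under `τ`. Hence after `‖u‖ + 1` factors `σ` every block is a single `a^{±1}` or contains
both generators. From then on the word is controlled by the numbers `a` and `b` of letters
`a^{±1}` and `b^{±1}`, the number `n` of changes of sign and the number `e` of isolated `a^{±1}`:
`σ` replaces `b` by `b + a - n`, whereas `τ` replaces `(a, n, e)` by `(a + b - n, n - 2 e, 0)`.
So `‖σ w‖ - ‖w‖ = a - n`, while `‖τ τ^m w‖ - ‖τ^m w‖` is `b - n`, plus `2 e` if `m > 0`.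
Passing from `w` to `σ w` changes the latter by `a - n`.
-/

/-! ### Cyclic length -/

section CyclicLength

variable {α : Type*}

theorem exists_isCyclicallyReduced_isConj (w : FreeGroup α) :
    ∃ l, FreeGroup.IsCyclicallyReduced l ∧ IsConj w (FreeGroup.mk l) := by
  classical
  refine ⟨_, FreeGroup.reduceCyclically.isCyclicallyReduced w.isReduced_toWord,
    (isConj_iff.2 ⟨FreeGroup.mk (FreeGroup.reduceCyclically.conjugator w.toWord), ?_⟩).symm⟩
  rw [FreeGroup.inv_mk, FreeGroup.mul_mk, FreeGroup.mul_mk,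
    FreeGroup.reduceCyclically.conj_conjugator_reduceCyclically, FreeGroup.mk_toWord]

variable [DecidableEq α]

theorem freeGroup_norm_pow_le (v : FreeGroup α) (n : ℕ) : (v ^ n).norm ≤ n * v.norm := by
  induction n with
  | zero => simp
  | succ n ih =>
    calc (v ^ (n + 1)).norm ≤ (v ^ n).norm + v.norm := pow_succ v n ▸ FreeGroup.norm_mul_le _ _
      _ ≤ (n + 1) * v.norm := by linarith

theorem norm_mk_pow_of_isCyclicallyReduced {l : List (α × Bool)}
    (hl : FreeGroup.IsCyclicallyReduced l) (n : ℕ) :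
    (FreeGroup.mk l ^ n).norm = n * l.length := by
  rw [FreeGroup.norm, FreeGroup.toWord_pow, FreeGroup.toWord_mk, hl.isReduced.reduce_eq,
    (hl.flatten_replicate n).isReduced.reduce_eq]
  simp

-- Conjugation changes the norm of every power by at most a constant, whereas norms of powers
-- of a cyclically reduced word grow linearly with slope its length.
theorem length_le_norm_of_isConj {l : List (α × Bool)} (hl : FreeGroup.IsCyclicallyReduced l)
    {v : FreeGroup α} (hv : IsConj v (FreeGroup.mk l)) : l.length ≤ v.norm := by
  obtain ⟨c, hc⟩ := isConj_iff.1 hv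
  have power_bound (n : ℕ) : n * l.length ≤ n * v.norm + 2 * c.norm :=
    calc n * l.length = (c * v ^ n * c⁻¹).norm := by
          rw [← norm_mk_pow_of_isCyclicallyReduced hl, ← hc, conj_pow]
      _ ≤ (c * v ^ n).norm + c⁻¹.norm := FreeGroup.norm_mul_le _ _
      _ ≤ (c.norm + (v ^ n).norm) + c.norm := by
          rw [FreeGroup.norm_inv_eq]; gcongr; exact FreeGroup.norm_mul_le _ _
      _ ≤ n * v.norm + 2 * c.norm := by linarith [freeGroup_norm_pow_le v n]
  by_contra! hlt
  nlinarith [power_bound (2 * c.norm + 1)]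

theorem cyclen_eq_length {w : F} {l : List (Fin 2 × Bool)}
    (hl : FreeGroup.IsCyclicallyReduced l) (hw : IsConj w (FreeGroup.mk l)) :
    cyclen w = l.length := by
  obtain ⟨c, hc⟩ := isConj_iff.1 hw
  have attained : len (c * w * c⁻¹) = l.length := by
    rw [hc, len, FreeGroup.toWord_mk, hl.isReduced.reduce_eq]
  refine le_antisymm (Nat.sInf_le ⟨c, attained⟩) (le_csInf ⟨_, c, attained⟩ ?_)
  rintro _ ⟨g, rfl⟩
  exact length_le_norm_of_isConj hl ((isConj_iff.2 ⟨g, rfl⟩ : IsConj w _).symm.trans hw)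

end CyclicLength

/-! ### Transvections on positive words -/

section Transvection

variable {α : Type*} [DecidableEq α]

/-- The endomorphism of a free group that fixes the generator `x` and multiplies every other
generator by `x` on the right. The automorphisms `σ` and `τ` are the two instances in rank two. -/
def transvection (x : α) : FreeGroup α →* FreeGroup α :=
  FreeGroup.lift fun y => if y = x then FreeGroup.of x else FreeGroup.of y * FreeGroup.of x

theorem sigma_apply (w : F) : σ w = transvection 1 w := by
  refine DFunLike.congr_fun (FreeGroup.ext_hom σ.toMonoidHom (transvection 1) fun i => ?_) w
  fin_cases i <;> simp [σ, mkAut, ga, gb, transvection]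

theorem tau_apply (w : F) : τ w = transvection 0 w := by
  refine DFunLike.congr_fun (FreeGroup.ext_hom τ.toMonoidHom (transvection 0) fun i => ?_) w
  fin_cases i <;> simp [τ, mkAut, ga, gb, transvection]

/-- The image of a positive word under `transvection x`, as a positive word. -/
def transvect (x : α) (p : List α) : List α :=
  p.flatMap fun y => if y = x then [x] else [y, x]

/-- The image of a positive word under `transvection x` without its final letter `x`. This is what
survives of a maximal positive subword: the final `x` cancels at the change of sign. -/
def trimTransvect (x : α) (p : List α) : List α := (transvect x p).dropLast

variable {x y : α} {p : List α}

theorem transvect_cons :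
    transvect x (y :: p) = (if y = x then [x] else [y, x]) ++ transvect x p := rfl

theorem transvect_concat :
    transvect x (p ++ [y]) = transvect x p ++ (if y = x then [] else [y]) ++ [x] := by
  by_cases hy : y = x <;> simp [transvect, hy]

theorem trimTransvect_concat :
    trimTransvect x (p ++ [y]) = transvect x p ++ if y = x then [] else [y] := by
  rw [trimTransvect, transvect_concat, List.dropLast_concat]

theorem transvect_eq_trimTransvect_concat (hp : p ≠ []) :
    transvect x p = trimTransvect x p ++ [x] := by
  obtain ⟨q, y, rfl⟩ := (List.eq_nil_or_concat' p).resolve_left hp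
  rw [trimTransvect_concat, transvect_concat]

theorem count_transvect_self : (transvect x p).count x = p.length := by
  induction p with
  | nil => rfl
  | cons y p ih =>
    by_cases hy : y = x <;> simp [transvect_cons, hy, ih]

theorem count_transvect_of_ne (hy : y ≠ x) : (transvect x p).count y = p.count y := by
  induction p with
  | nil => rfl
  | cons z p ih =>
    by_cases hz : z = x <;> simp [transvect_cons, hz, ih, hy.symm, List.count_cons]

theorem count_trimTransvect_self (hp : p ≠ []) :
    (trimTransvect x p).count x + 1 = p.length := by
  rw [← count_transvect_self (x := x), transvect_eq_trimTransvect_concat hp]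
  simp

theorem count_trimTransvect_of_ne (hy : y ≠ x) : (trimTransvect x p).count y = p.count y := by
  rcases eq_or_ne p [] with rfl | hp
  · rfl
  · have count_eq := count_transvect_of_ne (p := p) hy
    rw [transvect_eq_trimTransvect_concat hp] at count_eq
    simpa [hy.symm] using count_eq

theorem mem_trimTransvect_of_ne (hy : y ≠ x) : y ∈ trimTransvect x p ↔ y ∈ p := by
  rw [← List.count_pos_iff, count_trimTransvect_of_ne hy, List.count_pos_iff]

theorem mem_trimTransvect_self (hp : p ≠ []) : x ∈ trimTransvect x p ↔ 1 < p.length := by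
  rw [← List.count_pos_iff, ← count_trimTransvect_self hp (x := x)]
  lia

theorem trimTransvect_eq_nil_iff (hp : p ≠ []) : trimTransvect x p = [] ↔ p = [x] := by
  constructor
  · intro h
    have length_eq : p.length = 1 := by rw [← count_trimTransvect_self hp, h]; rfl
    obtain ⟨y, rfl⟩ := List.length_eq_one_iff.1 length_eq
    by_contra hy
    have := count_trimTransvect_of_ne (p := [y]) (fun hyx : y = x => hy (hyx ▸ rfl))
    simp [h] at this
  · rintro rfl
    simp [trimTransvect, transvect]

theorem trimTransvect_eq_singleton_iff (hp : p ≠ []) (hy : y ≠ x) :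
    trimTransvect x p = [y] ↔ p = [y] := by
  constructor
  · intro h
    have length_eq : p.length = 1 := by
      rw [← count_trimTransvect_self (x := x) hp, h]
      simp [hy]
    obtain ⟨z, rfl⟩ := List.length_eq_one_iff.1 length_eq
    have mem : y ∈ [z] := (mem_trimTransvect_of_ne hy).1 (by simp [h])
    rw [List.mem_singleton.1 mem]
  · rintro rfl
    simp [trimTransvect, transvect, hy]

theorem head?_trimTransvect (h : trimTransvect x p ≠ []) :
    (trimTransvect x p).head? = p.head? := by
  have one_lt : 1 < (transvect x p).length := by
    have := List.length_pos_of_ne_nil h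
    rw [trimTransvect, List.length_dropLast] at this
    lia
  rw [trimTransvect, List.head?_dropLast, if_pos one_lt]
  cases p with
  | nil => rfl
  | cons y p => by_cases hy : y = x <;> simp [transvect_cons, hy]

theorem getLast?_trimTransvect (h : trimTransvect x p ≠ []) :
    (trimTransvect x p).getLast? = p.getLast? := by
  rcases List.eq_nil_or_concat' p with rfl | ⟨q, y, rfl⟩
  · rfl
  · rw [trimTransvect_concat] at h ⊢
    by_cases hy : y = x
    · rw [if_pos hy, List.append_nil] at h ⊢
      have hq : q ≠ [] := by rintro rfl; exact h rfl
      simp [transvect_eq_trimTransvect_concat hq, hy]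
    · simp [hy]

theorem getLast?_trimTransvect_ne_head? {q : List α} (hp : p ≠ []) (hq : q ≠ [])
    (h : p.getLast? ≠ q.head?) :
    (trimTransvect x p).getLast? ≠ (trimTransvect x q).head? := by
  by_cases hp' : trimTransvect x p = [] <;> by_cases hq' : trimTransvect x q = []
  · rw [(trimTransvect_eq_nil_iff hp).1 hp', (trimTransvect_eq_nil_iff hq).1 hq'] at h
    simp at h
  · simpa [hp', eq_comm] using hq'
  · simpa [hq'] using hp'
  · rwa [getLast?_trimTransvect hp', head?_trimTransvect hq']

end Transvection

/-! ### Block decompositions of cyclic words -/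

/-- A subword all of whose letters carry the same exponent: the letters in reading order, and
`sign = true` for exponent `1`, `sign = false` for exponent `-1`. -/
structure Block (α : Type*) where
  letters : List α
  sign : Bool

namespace Block

variable {α : Type*}

/-- The word in the free group alphabet spelled by a block. -/
def word (g : Block α) : List (α × Bool) := g.letters.map (·, g.sign)

/-- `g.Abuts h` says that `h` may follow `g` in a reduced alternating word: the signs are opposite
and no cancellation occurs at the boundary. A boundary between two empty blocks is excluded, a
boundary between an empty and a nonempty block is allowed. -/
def Abuts (g h : Block α) : Prop :=
  h.sign = !g.sign ∧ g.letters.getLast? ≠ h.letters.head?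

/-- What survives of a block of an alternating word under `transvection x`. -/
def transvect [DecidableEq α] (x : α) (g : Block α) : Block α :=
  ⟨trimTransvect x g.letters, g.sign⟩

end Block

/-- The word spelled by a sequence of blocks. -/
def blockWord {α : Type*} (L : List (Block α)) : List (α × Bool) := L.flatMap Block.word

/-- A cyclic sequence of nonempty blocks spelling an alternating, cyclically reduced word. -/
structure IsBlockCycle {α : Type*} (L : List (Block α)) : Prop where
  ne_nil : ∀ g ∈ L, g.letters ≠ []
  chain : Cycle.Chain Block.Abuts (L : Cycle (Block α))

section BlockWord

variable {α : Type*} {L M : List (Block α)}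

theorem freeGroup_mk_cons (y : α) (s : Bool) (l : List (α × Bool)) :
    FreeGroup.mk ((y, s) :: l) =
      (if s then FreeGroup.of y else (FreeGroup.of y)⁻¹) * FreeGroup.mk l := by
  cases s <;> simp [FreeGroup.of, FreeGroup.inv_mk, FreeGroup.invRev]

theorem Block.isCyclicallyReduced_word (g : Block α) :
    FreeGroup.IsCyclicallyReduced g.word := by
  have same_sign : ∀ y ∈ g.word, y.2 = g.sign := by simp +contextual [Block.word]
  refine FreeGroup.isCyclicallyReduced_iff.2 ⟨List.Pairwise.isChain ?_, fun y hy z hz _ => ?_⟩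
  · exact List.pairwise_map.2 (List.pairwise_of_forall fun _ _ _ => rfl)
  · rw [same_sign y (List.mem_of_getLast? hy), same_sign z (List.mem_of_head? hz)]

theorem blockWord_cons (g : Block α) : blockWord (g :: L) = g.word ++ blockWord L :=
  List.flatMap_cons

theorem blockWord_append : blockWord (L ++ M) = blockWord L ++ blockWord M :=
  List.flatMap_append

theorem length_blockWord : (blockWord L).length = (L.flatMap Block.letters).length := by
  simp [blockWord, Block.word, List.length_flatMap]

theorem isConj_mk_blockWord_of_isRotated (h : L ~r M) :
    IsConj (FreeGroup.mk (blockWord L)) (FreeGroup.mk (blockWord M)) := by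
  obtain ⟨n, hn, rfl⟩ := List.isRotated_iff_mod.1 h
  nth_rewrite 1 [← List.take_append_drop n L]
  rw [List.rotate_eq_drop_append_take hn, blockWord_append, blockWord_append,
    ← FreeGroup.mul_mk, ← FreeGroup.mul_mk]
  exact isConj_iff.2 ⟨(FreeGroup.mk (blockWord (L.take n)))⁻¹, by group⟩

theorem isReduced_blockWord (hne : ∀ g ∈ L, g.letters ≠ []) (hL : L.IsChain Block.Abuts) :
    FreeGroup.IsReduced (blockWord L) := by
  rw [blockWord, List.flatMap_def, FreeGroup.IsReduced,
    List.isChain_flatten (by simpa [Block.word] using hne)]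
  refine ⟨?_, (List.isChain_map _).2 (hL.imp ?_)⟩
  · simpa using fun g _ => g.isCyclicallyReduced_word.isReduced
  · rintro g h ⟨-, hgh⟩ _ hy _ hz hyz
    simp only [Block.word, List.getLast?_map, List.head?_map, Option.mem_def,
      Option.map_eq_some_iff] at hy hz
    obtain ⟨i, hi, rfl⟩ := hy
    obtain ⟨j, hj, rfl⟩ := hz
    obtain rfl : i = j := hyz
    exact absurd (hi.trans hj.symm) hgh

theorem IsBlockCycle.isCyclicallyReduced_blockWord (h : IsBlockCycle L) :
    FreeGroup.IsCyclicallyReduced (blockWord L) := by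
  cases L with
  | nil => simp [blockWord]
  | cons g M =>
    have hg : g.word ≠ [] := by simpa [Block.word] using h.ne_nil g (by simp)
    have reduced_twice : FreeGroup.IsReduced (blockWord ((g :: M) ++ [g])) :=
      isReduced_blockWord (fun k hk => h.ne_nil k (by simpa [or_comm] using hk))
        ((Cycle.chain_coe_cons _ _ _).1 h.chain)
    rw [blockWord_append, FreeGroup.IsReduced, List.isChain_append] at reduced_twice
    refine FreeGroup.isCyclicallyReduced_iff.2
      ⟨reduced_twice.1, fun y hy z hz => reduced_twice.2.2 y hy z ?_⟩
    rw [blockWord_cons, List.head?_append_of_ne_nil _ hg] at hz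
    simpa [blockWord] using hz

end BlockWord

section TransvectBlocks

variable {α : Type*} [DecidableEq α] {x : α} {L : List (Block α)}

/-- The part of `transvection x` of a block that is carried to its left end: applied to an inverse
letter `y⁻¹`, the transvection produces `x⁻¹` in front of `y⁻¹` instead of `x` behind `y`. -/
def offset (x : α) (s : Bool) : FreeGroup α := if s then 1 else (FreeGroup.of x)⁻¹

theorem transvection_mk_word (g : Block α) :
    transvection x (FreeGroup.mk g.word) = offset x g.sign *
      FreeGroup.mk (Block.word ⟨transvect x g.letters, g.sign⟩) * (offset x g.sign)⁻¹ := by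
  obtain ⟨p, s⟩ := g
  induction p with
  | nil => simp [Block.word, transvect, ← FreeGroup.one_eq_mk]
  | cons y p ih =>
    simp only [Block.word, List.map_cons] at ih ⊢
    rw [freeGroup_mk_cons, map_mul, ih, transvect_cons]
    by_cases hy : y = x <;> cases s <;>
      simp [hy, freeGroup_mk_cons, transvection, offset, mul_assoc]

theorem isConj_transvection_word (g : Block α) :
    IsConj (transvection x (FreeGroup.mk g.word))
      (FreeGroup.mk (Block.word ⟨transvect x g.letters, g.sign⟩)) := by
  rw [transvection_mk_word]
  exact (isConj_iff.2 ⟨offset x g.sign, rfl⟩).symm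

theorem transvection_mk_word_of_ne_nil {g : Block α} (hg : g.letters ≠ []) :
    transvection x (FreeGroup.mk g.word) = offset x g.sign *
      FreeGroup.mk (g.transvect x).word * (offset x (!g.sign))⁻¹ := by
  have word_eq : Block.word ⟨transvect x g.letters, g.sign⟩ =
      (g.transvect x).word ++ [(x, g.sign)] := by
    simp [Block.word, Block.transvect, transvect_eq_trimTransvect_concat hg]
  rw [transvection_mk_word, word_eq, ← FreeGroup.mul_mk]
  cases g.sign <;> simp [-FreeGroup.mul_mk, freeGroup_mk_cons, offset, mul_assoc,
    ← FreeGroup.one_eq_mk]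

-- The offsets of adjacent blocks cancel because their signs are opposite.
theorem transvection_mk_blockWord (g h : Block α) (M : List (Block α))
    (hne : ∀ k ∈ g :: M, k.letters ≠ []) (hM : List.IsChain Block.Abuts (g :: (M ++ [h]))) :
    transvection x (FreeGroup.mk (blockWord (g :: M))) = offset x g.sign *
      FreeGroup.mk (blockWord ((g :: M).map (Block.transvect x))) * (offset x h.sign)⁻¹ := by
  induction M generalizing g with
  | nil =>
    have hgh : h.sign = !g.sign := (List.isChain_pair.1 hM).1
    simpa [blockWord, hgh] using transvection_mk_word_of_ne_nil (hne g (by simp))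
  | cons k M ih =>
    have hgk : k.sign = !g.sign := (List.isChain_cons_cons.1 hM).1.1
    rw [blockWord_cons g, List.map_cons, blockWord_cons (g.transvect x), ← FreeGroup.mul_mk,
      ← FreeGroup.mul_mk, map_mul, transvection_mk_word_of_ne_nil (hne g (by simp)),
      ih k (fun l hl => hne l (List.mem_cons_of_mem g hl)) hM.tail, hgk]
    group

theorem IsBlockCycle.isConj_transvection (hL : IsBlockCycle L) :
    IsConj (transvection x (FreeGroup.mk (blockWord L)))
      (FreeGroup.mk (blockWord (L.map (Block.transvect x)))) := by
  cases L with
  | nil => simp [blockWord, ← FreeGroup.one_eq_mk]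
  | cons g M =>
    rw [transvection_mk_blockWord g g M hL.ne_nil ((Cycle.chain_coe_cons _ _ _).1 hL.chain)]
    exact (isConj_iff.2 ⟨offset x g.sign, rfl⟩).symm

theorem IsBlockCycle.chain_transvect (hL : IsBlockCycle L) :
    Cycle.Chain Block.Abuts (L.map (Block.transvect x) : Cycle (Block α)) := by
  cases L with
  | nil => simp
  | cons g M =>
    have hne : ∀ k ∈ g :: (M ++ [g]), k.letters ≠ [] := fun k hk =>
      hL.ne_nil k (by simpa [or_comm] using hk)
    have hmap : (g :: M).map (Block.transvect x) ++ [g.transvect x] =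
        (g :: (M ++ [g])).map (Block.transvect x) := by simp
    rw [List.map_cons, Cycle.chain_coe_cons, ← List.cons_append, ← List.map_cons, hmap,
      List.isChain_map]
    exact ((Cycle.chain_coe_cons _ _ _).1 hL.chain).imp_of_mem_imp fun k l hk hl hkl =>
      ⟨hkl.1, getLast?_trimTransvect_ne_head? (hne k hk) (hne l hl) hkl.2⟩

end TransvectBlocks

/-! ### Absorbing empty blocks -/

/-- One step of removing an empty block: its two neighbours, which have the same sign, are
merged. The cyclic sequences are rotated so that the three blocks come first. -/
inductive Absorb {α : Type*} : List (Block α) → List (Block α) → Prop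
  | intro {L M : List (Block α)} {p q : List α} {s : Bool} (hp : p ≠ []) (hq : q ≠ [])
      (h : L ~r ⟨p, s⟩ :: ⟨[], !s⟩ :: ⟨q, s⟩ :: M) : Absorb L (⟨p ++ q, s⟩ :: M)

/-- The other outcome of removing empty blocks: only the nonempty block `g` is left, together with
one empty block that separates the end of `g` from its beginning. -/
structure IsCollapsed {α : Type*} (L : List (Block α)) (g : Block α) : Prop where
  ne_nil : g.letters ≠ []
  isRotated : L ~r [g, ⟨[], !g.sign⟩]

section Absorb

variable {α : Type*} {L M : List (Block α)}

open Relation (ReflTransGen)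

theorem isConj_of_absorb (h : ReflTransGen Absorb L M) :
    IsConj (FreeGroup.mk (blockWord L)) (FreeGroup.mk (blockWord M)) := by
  induction h with
  | refl => exact IsConj.refl _
  | tail _ h ih =>
    obtain ⟨-, -, h⟩ := h
    refine ih.trans ?_
    simpa [blockWord, Block.word] using isConj_mk_blockWord_of_isRotated h

theorem perm_letters_of_absorb (h : ReflTransGen Absorb L M) :
    (L.flatMap Block.letters).Perm (M.flatMap Block.letters) := by
  induction h with
  | refl => exact List.Perm.refl _
  | tail _ h ih =>
    obtain ⟨-, -, h⟩ := h
    simpa using ih.trans (h.perm.flatMap_right _)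

/-- The number of empty blocks of a sequence. -/
def emptyCount (L : List (Block α)) : ℕ := L.countP fun g => g.letters.isEmpty

theorem Absorb.length_eq (h : Absorb L M) : L.length = M.length + 2 := by
  obtain ⟨-, -, h⟩ := h
  simpa using h.perm.length_eq

theorem Absorb.emptyCount_eq (h : Absorb L M) : emptyCount L = emptyCount M + 1 := by
  obtain ⟨hp, hq, h⟩ := h
  simpa [emptyCount, hp, hq] using h.perm.countP_eq fun g => g.letters.isEmpty

theorem length_add_emptyCount_of_absorb (h : ReflTransGen Absorb L M) :
    L.length + 2 * emptyCount M = M.length + 2 * emptyCount L := by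
  induction h with
  | refl => rfl
  | tail _ h ih =>
    have := h.length_eq
    have := h.emptyCount_eq
    lia

theorem sum_map_letters_le_of_absorb {f : List α → ℕ} (hf : ∀ p q, f (p ++ q) ≤ f p + f q)
    (h : ReflTransGen Absorb L M) :
    (M.map fun g => f g.letters).sum ≤ (L.map fun g => f g.letters).sum := by
  induction h with
  | refl => exact le_rfl
  | tail _ h ih =>
    obtain @⟨N, p, q, s, -, -, h⟩ := h
    refine le_trans ?_ ih
    rw [(h.perm.map fun g => f g.letters).sum_eq]
    simp only [List.map_cons, List.sum_cons]
    linarith [hf p q]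

theorem forall_letters_of_absorb {P : List α → Prop} (hP : ∀ p q, P p → P (p ++ q))
    (h : ReflTransGen Absorb L M) (hL : ∀ g ∈ L, g.letters ≠ [] → P g.letters) :
    ∀ g ∈ M, g.letters ≠ [] → P g.letters := by
  induction h with
  | refl => exact hL
  | tail _ h ih =>
    obtain ⟨hp, -, h⟩ := h
    intro g hg hne
    have mem := fun g => (h.perm.mem_iff (a := g)).2
    rcases List.mem_cons.1 hg with rfl | hg
    · exact hP _ _ (ih _ (mem _ List.mem_cons_self) hp)
    · exact ih _ (mem _ (by simp [hg])) hne

namespace IsCollapsed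

variable {g : Block α}

theorem isConj (h : IsCollapsed L g) :
    IsConj (FreeGroup.mk (blockWord L)) (FreeGroup.mk g.word) := by
  simpa [blockWord, Block.word] using isConj_mk_blockWord_of_isRotated h.isRotated

theorem perm_letters (h : IsCollapsed L g) : (L.flatMap Block.letters).Perm g.letters := by
  simpa using h.isRotated.perm.flatMap_right Block.letters

theorem length_eq (h : IsCollapsed L g) : L.length = 2 * emptyCount L := by
  rw [emptyCount, h.isRotated.perm.countP_eq, h.isRotated.perm.length_eq]
  simp [h.ne_nil]

end IsCollapsed

theorem Block.Abuts.ne_nil_of_left_eq_nil {g h : Block α} (hgh : g.Abuts h) (hg : g.letters = []) :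
    h.letters ≠ [] := by
  intro hh
  simpa [hg, hh] using hgh.2

theorem Block.Abuts.ne_nil_of_right_eq_nil {g h : Block α} (hgh : g.Abuts h)
    (hh : h.letters = []) : g.letters ≠ [] := fun hg => hgh.ne_nil_of_left_eq_nil hg hh

theorem chain_merge {p q : List α} {s : Bool} (hp : p ≠ []) (hq : q ≠ [])
    (h : List.IsChain Block.Abuts (⟨q, s⟩ :: (M ++ [⟨p, s⟩]))) :
    Cycle.Chain Block.Abuts ((⟨p ++ q, s⟩ :: M : List (Block α)) : Cycle (Block α)) := by
  rw [Cycle.chain_coe_cons]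
  have left_merged : List.IsChain Block.Abuts ((⟨p ++ q, s⟩ :: M) ++ [⟨p, s⟩]) :=
    h.imp_head fun hz => by simpa [Block.Abuts, List.getLast?_append_of_ne_nil _ hq] using hz
  rw [← List.cons_append, List.isChain_append]
  rw [List.isChain_append] at left_merged
  refine ⟨left_merged.1, List.isChain_singleton _, fun g hg h hh => ?_⟩
  obtain rfl : ⟨p ++ q, s⟩ = h := by simpa using hh
  simpa [Block.Abuts, List.head?_append_of_ne_nil _ hp] using
    left_merged.2.2 g hg ⟨p, s⟩ (by simp)

theorem exists_absorb {e : Block α} (he : e ∈ L) (he' : e.letters = [])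
    (hL : Cycle.Chain Block.Abuts (L : Cycle (Block α))) :
    (∃ g, IsCollapsed L g) ∨
      ∃ M, Absorb L M ∧ Cycle.Chain Block.Abuts (M : Cycle (Block α)) := by
  obtain ⟨A, B, rfl⟩ := List.append_of_mem he
  have rotated : A ++ e :: B ~r e :: (B ++ A) := List.isRotated_append
  rw [Cycle.coe_eq_coe.2 rotated] at hL
  generalize B ++ A = K at rotated hL
  obtain ⟨_, t⟩ := e
  obtain rfl : _ = [] := he'
  rw [Cycle.chain_coe_cons] at hL
  cases K with
  | nil => simpa using (List.isChain_pair.1 hL).1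
  | cons g K =>
    obtain ⟨q, s⟩ := g
    obtain ⟨hqe, hK⟩ : Block.Abuts ⟨[], t⟩ ⟨q, s⟩ ∧
      List.IsChain Block.Abuts (⟨q, s⟩ :: K ++ [⟨[], t⟩]) := List.isChain_cons_cons.1 hL
    have hq : q ≠ [] := hqe.ne_nil_of_left_eq_nil rfl
    obtain rfl : s = !t := hqe.1
    rcases List.eq_nil_or_concat' K with rfl | ⟨M, ⟨p, s⟩, rfl⟩
    · exact .inl ⟨⟨q, !t⟩, hq, rotated.trans (by simpa using List.isRotated_concat _ [_])⟩
    · have hpe : Block.Abuts ⟨p, s⟩ ⟨[], t⟩ := by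
        rw [List.isChain_append] at hK
        exact hK.2.2 _ (by simp [List.getLast?_cons]) _ (by simp)
      have hp : p ≠ [] := hpe.ne_nil_of_right_eq_nil rfl
      obtain rfl : s = !t := by simpa [eq_comm] using congrArg not hpe.1
      refine .inr ⟨_, .intro hp hq (rotated.trans ?_), chain_merge hp hq hK.left_of_append⟩
      simpa using List.isRotated_append (l := ⟨[], t⟩ :: ⟨q, !t⟩ :: M) (l' := [⟨p, !t⟩])

theorem exists_reflTransGen_absorb (hL : Cycle.Chain Block.Abuts (L : Cycle (Block α))) :
    ∃ M, ReflTransGen Absorb L M ∧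
      (IsBlockCycle M ∨ ∃ g, IsCollapsed M g) := by
  induction hn : L.length using Nat.strong_induction_on generalizing L with
  | _ n ih =>
    subst hn
    by_cases hne : ∀ g ∈ L, g.letters ≠ []
    · exact ⟨L, .refl, .inl ⟨hne, hL⟩⟩
    · push Not at hne
      obtain ⟨e, he, he'⟩ := hne
      rcases exists_absorb he he' hL with collapsed | ⟨M, hLM, hM⟩
      · exact ⟨L, .refl, .inr collapsed⟩
      · have shorter : M.length < L.length := by
          have := hLM.length_eq
          lia
        obtain ⟨N, hMN, hN⟩ := ih _ shorter hM rfl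
        exact ⟨N, .head hLM hMN, hN⟩

end Absorb

section Decomposition

variable {α : Type*}

/-- The block consisting of a single letter. -/
def Block.single (y : α × Bool) : Block α := ⟨[y.1], y.2⟩

-- Between letters of the same sign, an empty block of the opposite sign is inserted.
theorem exists_isChain_single_append_single {y z : α × Bool} (hyz : y.1 = z.1 → y.2 = z.2) :
    ∃ B : List (Block α), blockWord B = [] ∧
      ∀ K, List.IsChain Block.Abuts (Block.single z :: K) →
        List.IsChain Block.Abuts (Block.single y :: (B ++ Block.single z :: K)) := by
  by_cases hs : y.2 = z.2
  · refine ⟨[⟨[], !y.2⟩], rfl, fun K hK => ?_⟩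
    simpa [Block.Abuts, Block.single, hs] using hK
  · refine ⟨[], rfl, fun K hK => List.isChain_cons_cons.2 ⟨⟨?_, ?_⟩, hK⟩⟩
    · simpa [Block.single, Bool.eq_not, eq_comm] using hs
    · simpa [Block.single] using mt hyz hs

theorem exists_isChain_blockWord_eq {y z : α × Bool} {l : List (α × Bool)}
    (hl : FreeGroup.IsReduced (y :: (l ++ [z]))) :
    ∃ L, List.IsChain Block.Abuts (Block.single y :: (L ++ [Block.single z])) ∧
      blockWord L = l := by
  induction l generalizing y with
  | nil =>
    obtain ⟨B, hB, hchain⟩ := exists_isChain_single_append_single (List.isChain_pair.1 hl)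
    exact ⟨B, hchain [] (List.isChain_singleton _), hB⟩
  | cons c l ih =>
    obtain ⟨hyc, hcl⟩ := List.isChain_cons_cons.1 hl
    obtain ⟨L, hL, rfl⟩ := ih hcl
    obtain ⟨B, hB, hchain⟩ := exists_isChain_single_append_single hyc
    refine ⟨B ++ Block.single c :: L, by simpa using hchain _ hL, ?_⟩
    simp [blockWord_append, blockWord_cons, hB, Block.word, Block.single]

theorem exists_chain_blockWord_eq {l : List (α × Bool)} (hl : FreeGroup.IsCyclicallyReduced l) :
    ∃ L : List (Block α), Cycle.Chain Block.Abuts (L : Cycle (Block α)) ∧ blockWord L = l := by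
  cases l with
  | nil => exact ⟨[], Cycle.Chain.nil _, rfl⟩
  | cons y l =>
    have closed_up : FreeGroup.IsReduced (y :: (l ++ [y])) := by
      rw [← List.cons_append, FreeGroup.IsReduced, List.isChain_append]
      refine ⟨hl.1, List.isChain_singleton _, fun z hz c hc => ?_⟩
      obtain rfl : y = c := by simpa using hc
      exact (FreeGroup.isCyclicallyReduced_iff.1 hl).2 z hz y rfl
    obtain ⟨L, hL, rfl⟩ := exists_isChain_blockWord_eq closed_up
    exact ⟨Block.single y :: L, (Cycle.chain_coe_cons _ _ _).2 hL, rfl⟩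

end Decomposition

section TransvectCycle

variable {α : Type*} [DecidableEq α] {x y : α} {L : List (Block α)}

open Relation (ReflTransGen)

theorem count_letters_transvect_of_ne (hy : y ≠ x) :
    ((L.map (Block.transvect x)).flatMap Block.letters).count y =
      (L.flatMap Block.letters).count y := by
  induction L with
  | nil => rfl
  | cons g L ih =>
    simp only [List.map_cons, List.flatMap_cons, List.count_append, ih, Block.transvect,
      count_trimTransvect_of_ne hy]

theorem count_letters_transvect_self (hL : ∀ g ∈ L, g.letters ≠ []) :
    ((L.map (Block.transvect x)).flatMap Block.letters).count x + L.length =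
      (L.flatMap Block.letters).length := by
  induction L with
  | nil => rfl
  | cons g L ih =>
    have hg := count_trimTransvect_self (x := x) (hL g List.mem_cons_self)
    have hL' := ih fun k hk => hL k (List.mem_cons_of_mem g hk)
    simp only [List.map_cons, List.flatMap_cons, List.count_append, List.length_append,
      List.length_cons, Block.transvect] at hL' ⊢
    lia

theorem emptyCount_transvect (hL : ∀ g ∈ L, g.letters ≠ []) :
    emptyCount (L.map (Block.transvect x)) = L.countP fun g => g.letters = [x] := by
  rw [emptyCount, List.countP_map]
  refine List.countP_congr fun g hg => ?_
  simp [Block.transvect, trimTransvect_eq_nil_iff (hL g hg)]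

theorem IsBlockCycle.exists_absorb_transvect (hL : IsBlockCycle L) (x : α) {w : FreeGroup α}
    (hw : IsConj w (FreeGroup.mk (blockWord L))) :
    ∃ M, ReflTransGen Absorb (L.map (Block.transvect x)) M ∧
      IsConj (transvection x w) (FreeGroup.mk (blockWord M)) ∧
      (IsBlockCycle M ∨ ∃ g, IsCollapsed M g) := by
  obtain ⟨M, hLM, hM⟩ := exists_reflTransGen_absorb (hL.chain_transvect (x := x))
  refine ⟨M, hLM, ?_, hM⟩
  exact ((transvection x).map_isConj hw).trans
    (hL.isConj_transvection.trans (isConj_of_absorb hLM))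

end TransvectCycle

/-! ### The pure weight in rank two -/

section RankTwo

open Relation (ReflTransGen)

theorem count_zero_add_count_one (p : List (Fin 2)) : p.count 0 + p.count 1 = p.length := by
  induction p with
  | nil => rfl
  | cons i p ih => fin_cases i <;> grind

/-- The length of a word in `b` alone, and `0` for a word containing `a`. -/
def pureWeight (p : List (Fin 2)) : ℕ := if 0 ∈ p then 0 else p.length

theorem pureWeight_le_length (p : List (Fin 2)) : pureWeight p ≤ p.length := by
  rw [pureWeight]
  split_ifs <;> simp

theorem pureWeight_append_le (p q : List (Fin 2)) :
    pureWeight (p ++ q) ≤ pureWeight p + pureWeight q := by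
  by_cases hp : 0 ∈ p <;> by_cases hq : 0 ∈ q <;> simp [pureWeight, hp, hq]

theorem pureWeight_trimTransvect_zero_le {p : List (Fin 2)} (hp : p ≠ []) :
    pureWeight (trimTransvect 0 p) ≤ pureWeight p := by
  by_cases hlen : 1 < p.length
  · simp [pureWeight, (mem_trimTransvect_self hp).2 hlen]
  · have length_eq : p.length = 1 := by
      have := List.length_pos_of_ne_nil hp
      lia
    obtain ⟨i, rfl⟩ := List.length_eq_one_iff.1 length_eq
    fin_cases i <;> decide

theorem pureWeight_trimTransvect_one {p : List (Fin 2)} (hp : p ≠ []) :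
    pureWeight (trimTransvect 1 p) = pureWeight p - 1 := by
  have mem_iff : 0 ∈ trimTransvect 1 p ↔ 0 ∈ p := mem_trimTransvect_of_ne (by decide)
  by_cases h0 : 0 ∈ p
  · simp [pureWeight, mem_iff, h0]
  · have count_zero : (trimTransvect 1 p).count 0 = 0 := List.count_eq_zero.2 (mt mem_iff.1 h0)
    have count_one := count_trimTransvect_self (x := 1) hp
    rw [pureWeight, pureWeight, if_neg (mt mem_iff.1 h0), if_neg h0, ← count_zero_add_count_one]
    lia

/-- The number of letters of a block sequence that lie in blocks without the letter `a`. -/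
def totalPureWeight (L : List (Block (Fin 2))) : ℕ := (L.map fun g => pureWeight g.letters).sum

theorem totalPureWeight_le_length (L : List (Block (Fin 2))) :
    totalPureWeight L ≤ (L.flatMap Block.letters).length := by
  rw [totalPureWeight, List.length_flatMap]
  exact List.sum_le_sum fun g _ => pureWeight_le_length g.letters

variable {L : List (Block (Fin 2))}

theorem totalPureWeight_transvect_zero_le (hL : ∀ g ∈ L, g.letters ≠ []) :
    totalPureWeight (L.map (Block.transvect 0)) ≤ totalPureWeight L := by
  rw [totalPureWeight, List.map_map]
  exact List.sum_le_sum fun g hg => pureWeight_trimTransvect_zero_le (hL g hg)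

theorem totalPureWeight_transvect_one_le (hL : ∀ g ∈ L, g.letters ≠ []) :
    totalPureWeight (L.map (Block.transvect 1)) ≤ totalPureWeight L - 1 := by
  induction L with
  | nil => rfl
  | cons g L ih =>
    have hg := pureWeight_trimTransvect_one (hL g List.mem_cons_self)
    have hL' := ih fun k hk => hL k (List.mem_cons_of_mem g hk)
    simp only [totalPureWeight, List.map_cons, List.sum_cons, Block.transvect] at hL' ⊢
    lia

/-- `w` is conjugate to a one-signed word, or to a cyclic alternating word in which at most `t`
letters belong to blocks without the letter `a`. -/
inductive HasPureWeightLE (w : F) (t : ℕ) : Prop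
  | oneSigned (g : Block (Fin 2)) (hw : IsConj w (FreeGroup.mk g.word))
  | alternating (L : List (Block (Fin 2))) (hL : IsBlockCycle L)
      (hw : IsConj w (FreeGroup.mk (blockWord L))) (ht : totalPureWeight L ≤ t)

theorem HasPureWeightLE.of_absorb {w : F} {t : ℕ} {M : List (Block (Fin 2))}
    (hw : IsConj w (FreeGroup.mk (blockWord M)))
    (hM : IsBlockCycle M ∨ ∃ g, IsCollapsed M g)
    (hLM : ReflTransGen Absorb L M) (ht : totalPureWeight L ≤ t) : HasPureWeightLE w t := by
  rcases hM with hM | ⟨g, hM⟩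
  · exact .alternating M hM hw ((sum_map_letters_le_of_absorb pureWeight_append_le hLM).trans ht)
  · exact .oneSigned g (hw.trans hM.isConj)

theorem hasPureWeightLE_cyclen (u : F) : HasPureWeightLE u (cyclen u) := by
  obtain ⟨l, hl, hul⟩ := exists_isCyclicallyReduced_isConj u
  obtain ⟨L, hL, rfl⟩ := exists_chain_blockWord_eq hl
  obtain ⟨M, hLM, hM⟩ := exists_reflTransGen_absorb hL
  refine .of_absorb (hul.trans (isConj_of_absorb hLM)) hM hLM ?_
  rw [cyclen_eq_length hl hul, length_blockWord]
  exact totalPureWeight_le_length L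

theorem HasPureWeightLE.tau {w : F} {t : ℕ} (h : HasPureWeightLE w t) :
    HasPureWeightLE (τ w) t := by
  rw [tau_apply]
  rcases h with ⟨g, hw⟩ | ⟨L, hL, hw, ht⟩
  · exact .oneSigned _ (((transvection 0).map_isConj hw).trans (isConj_transvection_word g))
  · obtain ⟨M, hLM, hwM, hM⟩ := hL.exists_absorb_transvect 0 hw
    exact .of_absorb hwM hM hLM ((totalPureWeight_transvect_zero_le hL.ne_nil).trans ht)

theorem HasPureWeightLE.sigma {w : F} {t : ℕ} (h : HasPureWeightLE w t) :
    HasPureWeightLE (σ w) (t - 1) := by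
  rw [sigma_apply]
  rcases h with ⟨g, hw⟩ | ⟨L, hL, hw, ht⟩
  · exact .oneSigned _ (((transvection 1).map_isConj hw).trans (isConj_transvection_word g))
  · obtain ⟨M, hLM, hwM, hM⟩ := hL.exists_absorb_transvect 1 hw
    exact .of_absorb hwM hM hLM
      ((totalPureWeight_transvect_one_le hL.ne_nil).trans (Nat.sub_le_sub_right ht 1))

/-! ### Profiles -/

/-- `p` contains both generators. -/
def IsMixed (p : List (Fin 2)) : Prop := 0 ∈ p ∧ 1 ∈ p

/-- `w` is conjugate to a cyclically reduced word with `a` letters `a^{±1}`, `b` letters `b^{±1}`,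
`n` changes of sign and `e` blocks consisting of a single `a^{±1}`, all other blocks being mixed.
A one-signed word has no change of sign, and its block is not counted in `e`. -/
inductive HasProfile (w : F) (a b n e : ℤ) : Prop
  | oneSigned (g : Block (Fin 2)) (hw : IsConj w (FreeGroup.mk g.word))
      (ha : g.letters.count 0 = a) (hb : g.letters.count 1 = b) (hn : n = 0) (he : e = 0)
  | alternating (L : List (Block (Fin 2))) (hL : IsBlockCycle L)
      (hw : IsConj w (FreeGroup.mk (blockWord L)))
      (ha : (L.flatMap Block.letters).count 0 = a) (hb : (L.flatMap Block.letters).count 1 = b)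
      (hn : L.length = n) (he : L.countP (fun g => g.letters = [0]) = e)
      (hmixed : ∀ g ∈ L, g.letters = [0] ∨ IsMixed g.letters)

variable {w : F} {a b n e : ℤ}

theorem HasProfile.cyclen_eq (h : HasProfile w a b n e) : (cyclen w : ℤ) = a + b := by
  rcases h with ⟨g, hw, rfl, rfl, -, -⟩ | ⟨L, hL, hw, rfl, rfl, -, -, -⟩
  · rw [cyclen_eq_length g.isCyclicallyReduced_word hw, Block.word, List.length_map,
      ← count_zero_add_count_one, Nat.cast_add]
  · rw [cyclen_eq_length hL.isCyclicallyReduced_blockWord hw, length_blockWord,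
      ← count_zero_add_count_one, Nat.cast_add]

theorem trimTransvect_one_of_zero_mem {p : List (Fin 2)} (hp : 0 ∈ p) :
    trimTransvect 1 p = [0] ∨ IsMixed (trimTransvect 1 p) := by
  have hne : p ≠ [] := List.ne_nil_of_mem hp
  rw [IsMixed, mem_trimTransvect_of_ne (by decide), mem_trimTransvect_self hne,
    trimTransvect_eq_singleton_iff hne (by decide)]
  by_cases hlen : 1 < p.length
  · exact .inr ⟨hp, hlen⟩
  · have length_eq : p.length = 1 := by
      have := List.length_pos_of_ne_nil hne
      lia
    obtain ⟨i, rfl⟩ := List.length_eq_one_iff.1 length_eq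
    exact .inl (by rw [List.mem_singleton.1 hp])

theorem IsMixed.trimTransvect_zero {p : List (Fin 2)} (hp : IsMixed p) :
    IsMixed (trimTransvect 0 p) := by
  refine ⟨(mem_trimTransvect_self (List.ne_nil_of_mem hp.1)).2 ?_,
    (mem_trimTransvect_of_ne (by decide)).2 hp.2⟩
  have := List.count_pos_iff.2 hp.1
  have := List.count_pos_iff.2 hp.2
  have := count_zero_add_count_one p
  lia

theorem IsBlockCycle.transvect_one (hL : IsBlockCycle L) (h0 : ∀ g ∈ L, 0 ∈ g.letters) :
    IsBlockCycle (L.map (Block.transvect 1)) := by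
  refine ⟨List.forall_mem_map.2 fun g hg => ?_, hL.chain_transvect⟩
  exact List.ne_nil_of_mem ((mem_trimTransvect_of_ne (by decide)).2 (h0 g hg))

theorem IsBlockCycle.hasProfile_sigma (hL : IsBlockCycle L) (h0 : ∀ g ∈ L, 0 ∈ g.letters)
    (hw : IsConj w (FreeGroup.mk (blockWord L))) :
    HasProfile (σ w) ((L.flatMap Block.letters).count 0)
      ((L.flatMap Block.letters).length - L.length) L.length
      (L.countP fun g => g.letters = [0]) := by
  rw [sigma_apply]
  refine .alternating _ (hL.transvect_one h0)
    (((transvection 1).map_isConj hw).trans hL.isConj_transvection) ?_ ?_ ?_ ?_ ?_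
  · rw [count_letters_transvect_of_ne (by decide)]
  · rw [← count_letters_transvect_self (x := 1) hL.ne_nil]
    simp
  · simp
  · rw [List.countP_map]
    congr 1
    refine List.countP_congr fun g hg => ?_
    simp [Block.transvect, trimTransvect_eq_singleton_iff (hL.ne_nil g hg)]
  · exact List.forall_mem_map.2 fun g hg => trimTransvect_one_of_zero_mem (h0 g hg)

theorem HasPureWeightLE.exists_hasProfile_sigma (h : HasPureWeightLE w 0) :
    ∃ a b n e, HasProfile (σ w) a b n e := by
  rcases h with ⟨g, hw⟩ | ⟨L, hL, hw, ht⟩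
  · rw [sigma_apply]
    exact ⟨_, _, _, _, .oneSigned _
      (((transvection 1).map_isConj hw).trans (isConj_transvection_word g)) rfl rfl rfl rfl⟩
  · refine ⟨_, _, _, _, hL.hasProfile_sigma (fun g hg => ?_) hw⟩
    have weight_eq : pureWeight g.letters = 0 := by
      refine Nat.le_zero.1 (le_trans ?_ ht)
      exact List.single_le_sum (by simp) _ (List.mem_map_of_mem hg)
    by_contra h0
    rw [pureWeight, if_neg h0, List.length_eq_zero_iff] at weight_eq
    exact hL.ne_nil g hg weight_eq

theorem HasProfile.sigma (h : HasProfile w a b n e) : HasProfile (σ w) a (b + a - n) n e := by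
  rcases h with ⟨g, hw, rfl, rfl, rfl, rfl⟩ | ⟨L, hL, hw, rfl, rfl, rfl, rfl, hmixed⟩
  · rw [sigma_apply]
    refine .oneSigned _ (((transvection 1).map_isConj hw).trans (isConj_transvection_word g))
      ?_ ?_ rfl rfl
    · rw [count_transvect_of_ne (by decide)]
    · rw [count_transvect_self, ← count_zero_add_count_one]
      push_cast
      ring
  · convert hL.hasProfile_sigma (fun g hg => ?_) hw using 1
    · rw [← count_zero_add_count_one]
      push_cast
      ring
    · rcases hmixed g hg with h | h
      · simp [h]
      · exact h.1

theorem IsBlockCycle.isMixed_of_absorb_transvect_zero {M : List (Block (Fin 2))}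
    (hL : IsBlockCycle L) (hmixed : ∀ g ∈ L, g.letters = [0] ∨ IsMixed g.letters)
    (hLM : ReflTransGen Absorb (L.map (Block.transvect 0)) M) :
    ∀ g ∈ M, g.letters ≠ [] → IsMixed g.letters := by
  refine forall_letters_of_absorb (P := IsMixed) ?_ hLM (List.forall_mem_map.2 fun g hg hne => ?_)
  · exact fun p q hp => ⟨List.mem_append_left q hp.1, List.mem_append_left q hp.2⟩
  · refine ((hmixed g hg).resolve_left fun h => hne ?_).trimTransvect_zero
    exact (trimTransvect_eq_nil_iff (hL.ne_nil g hg)).2 h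

theorem HasProfile.tau (h : HasProfile w a b n e) :
    HasProfile (τ w) (a + b - n) b (n - 2 * e) 0 := by
  rw [tau_apply]
  rcases h with ⟨g, hw, rfl, rfl, rfl, rfl⟩ | ⟨L, hL, hw, rfl, rfl, rfl, rfl, hmixed⟩
  · refine .oneSigned _ (((transvection 0).map_isConj hw).trans (isConj_transvection_word g))
      ?_ ?_ rfl rfl
    · rw [count_transvect_self, ← count_zero_add_count_one]
      push_cast
      ring
    · rw [count_transvect_of_ne (by decide)]
  · obtain ⟨M, hLM, hwM, hM⟩ := hL.exists_absorb_transvect 0 hw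
    have letters_perm := perm_letters_of_absorb hLM
    have length_eq := length_add_emptyCount_of_absorb hLM
    rw [emptyCount_transvect hL.ne_nil, List.length_map] at length_eq
    have count_zero := count_letters_transvect_self (x := 0) hL.ne_nil
    rw [letters_perm.count_eq, ← count_zero_add_count_one] at count_zero
    have count_one := count_letters_transvect_of_ne (x := 0) (y := 1) (L := L) (by decide)
    rw [letters_perm.count_eq] at count_one
    rcases hM with hM | ⟨g, hM⟩
    · have all_mixed : ∀ g ∈ M, IsMixed g.letters := fun g hg =>
        hL.isMixed_of_absorb_transvect_zero hmixed hLM g hg (hM.ne_nil g hg)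
      have empty_eq : emptyCount M = 0 :=
        List.countP_eq_zero.2 fun g hg => by simpa using hM.ne_nil g hg
      have isolated_eq : M.countP (fun g => g.letters = [0]) = 0 :=
        List.countP_eq_zero.2 fun g hg => by
          rw [decide_eq_true_iff]
          intro hsingle
          simpa [hsingle] using (all_mixed g hg).2
      exact .alternating M hM hwM (by lia) (by lia) (by lia) (by lia)
        fun g hg => .inr (all_mixed g hg)
    · have collapsed_length := hM.length_eq
      rw [hM.perm_letters.count_eq] at count_zero count_one
      exact .oneSigned g (hwM.trans hM.isConj) (by lia) (by lia) (by lia) rfl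

theorem HasProfile.cyclen_sigma_sub (h : HasProfile w a b n e) :
    (cyclen (σ w) : ℤ) - cyclen w = a - n := by
  rw [h.sigma.cyclen_eq, h.cyclen_eq]
  ring

theorem HasProfile.cyclen_tau_sub (h : HasProfile w a b n e) :
    (cyclen (τ w) : ℤ) - cyclen w = b - n := by
  rw [h.tau.cyclen_eq, h.cyclen_eq]
  ring

-- After the first `τ` no isolated letter is left, so `b` and `n` stay constant from then on.
theorem HasProfile.tau_pow_succ (h : HasProfile w a b n e) (m : ℕ) :
    ∃ a', HasProfile ((τ ^ (m + 1)) w) a' b (n - 2 * e) 0 := by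
  induction m with
  | zero => exact ⟨_, by simpa using h.tau⟩
  | succ m ih =>
    obtain ⟨a', h'⟩ := ih
    rw [pow_succ', MulAut.mul_apply]
    exact ⟨_, by simpa using h'.tau⟩

theorem HasProfile.cyclen_tau_tau_pow_sub (h : HasProfile w a b n e) (m : ℕ) :
    (cyclen (τ ((τ ^ m) w)) : ℤ) - cyclen ((τ ^ m) w) =
      b - n + if m = 0 then 0 else 2 * e := by
  cases m with
  | zero => simpa using h.cyclen_tau_sub
  | succ m =>
    obtain ⟨a', h'⟩ := h.tau_pow_succ m
    rw [h'.cyclen_tau_sub, if_neg m.succ_ne_zero]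
    ring

end RankTwo

/-! ### Chains -/

theorem pow_apply_induction {P : ℕ → F → Prop} {φ : MulAut F} {d : ℕ}
    (hφ : ∀ n w, P n w → P (n - d) (φ w)) (k : ℕ) {n : ℕ} {w : F} (h : P n w) :
    P (n - k * d) ((φ ^ k) w) := by
  induction k with
  | zero => simpa using h
  | succ k ih =>
    rw [pow_succ', MulAut.mul_apply, Nat.succ_mul, ← Nat.sub_sub]
    exact hφ _ _ ih

theorem chainC1_induction {P : ℕ → F → Prop} (hσ : ∀ n w, P n w → P (n - 1) (σ w))
    (hτ : ∀ n w, P n w → P n (τ w)) (c : List (ℕ × ℕ)) {n : ℕ} {w : F} (h : P n w) :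
    P (n - sigmaCount c) (chainC1 c w) := by
  induction c with
  | nil => simpa [chainC1, sigmaCount] using h
  | cons p c ih =>
    have after_sigma := pow_apply_induction hσ p.1 ih
    have after_tau := pow_apply_induction (d := 0) hτ p.2 after_sigma
    simpa [chainC1, sigmaCount, Nat.sub_sub, add_comm] using after_tau

/-- `ProfileWithin n w` guarantees a profile after `n` further factors `σ`: the case `0` says that
`w` has a profile, the case `n + 1` that its pure weight is at most `n`. -/
def ProfileWithin : ℕ → F → Prop
  | 0, w => ∃ a b n e, HasProfile w a b n e
  | n + 1, w => HasPureWeightLE w n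

theorem ProfileWithin.sigma : ∀ n w, ProfileWithin n w → ProfileWithin (n - 1) (σ w)
  | 0, _, ⟨_, _, _, _, h⟩ => ⟨_, _, _, _, h.sigma⟩
  | 1, _, h => HasPureWeightLE.exists_hasProfile_sigma h
  | _ + 2, _, h => HasPureWeightLE.sigma h

theorem ProfileWithin.tau : ∀ n w, ProfileWithin n w → ProfileWithin n (τ w)
  | 0, _, ⟨_, _, _, _, h⟩ => ⟨_, _, _, _, h.tau⟩
  | _ + 1, _, h => HasPureWeightLE.tau h

theorem exists_hasProfile_chainC1 {u : F} {c : List (ℕ × ℕ)} (hc : cyclen u + 1 ≤ sigmaCount c) :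
    ∃ a b n e, HasProfile (chainC1 c u) a b n e := by
  have reached : ProfileWithin (cyclen u + 1 - sigmaCount c) (chainC1 c u) :=
    chainC1_induction ProfileWithin.sigma ProfileWithin.tau c (hasPureWeightLE_cyclen u)
  rwa [Nat.sub_eq_zero_of_le hc] at reached

/-- Lemma 4.1 (ii). -/
theorem stmt4 (u : F) (m : ℕ) (c₁ : List (ℕ × ℕ)) (hne : c₁ ≠ [])
    (hσ : cyclen u + 1 ≤ sigmaCount c₁) :
    (cyclen (τ ((τ ^ m * σ * chainC1 c₁) u)) : ℤ) - cyclen ((τ ^ m * σ * chainC1 c₁) u)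
      = ((cyclen (τ ((τ ^ m * chainC1 c₁) u)) : ℤ) - cyclen ((τ ^ m * chainC1 c₁) u))
        + ((cyclen (σ (chainC1 c₁ u)) : ℤ) - cyclen (chainC1 c₁ u)) := by
  obtain ⟨a, b, n, e, h⟩ := exists_hasProfile_chainC1 hσ
  simp only [MulAut.mul_apply]
  rw [h.sigma.cyclen_tau_tau_pow_sub, h.cyclen_tau_tau_pow_sub, h.cyclen_sigma_sub]
  ring
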